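/- Let G be a tree of order n ≥ 2. Then avd(G) = 2n/3 if and only if every non-leaf vertex of G is a support vertex with exactly one or two leaf neighbors. -/

import Mathlib

open scoped Classical

/-- The family of all dominating sets of `G`, as a `Finset` of `Finset`s. -/
noncomputable def domSets {V : Type*} [Fintype V] (G : SimpleGraph V) :
    Finset (Finset V) :=
  Finset.univ.filter fun S => ∀ v ∉ S, ∃ u ∈ S, G.Adj u v

/-- The average order of a dominating set of `G`. -/
noncomputable def avd {V : Type*} [Fintype V] (G : SimpleGraph V) : ℚ :=
  (∑ S ∈ domSets G, (S.card : ℚ)) / ((domSets G).card : ℚ)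

/-- A leaf is a vertex of degree one. -/
noncomputable def IsLeaf {V : Type*} [Fintype V] (G : SimpleGraph V) (v : V) : Prop :=
  G.degree v = 1

/-- The set of leaf neighbors of `w` in `G`. -/
noncomputable def leafNbrSet {V : Type*} [Fintype V] (G : SimpleGraph V) (w : V) : Set V :=
  {v | G.Adj w v ∧ IsLeaf G v}

/-- A support vertex is a vertex adjacent to at least one leaf. -/
noncomputable def IsSupport {V : Type*} [Fintype V] (G : SimpleGraph V) (w : V) : Prop :=
  ∃ v, G.Adj w v ∧ IsLeaf G v

/-!
Call `v ∈ S` critical in a dominating set `S` if `S \ {v}` is not dominating. Deleting `v` matches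
the dominating sets containing `v` non-critically with those omitting `v`, so
`∑ |S| = ∑ |Sᶜ| + #{(S, v) | v critical in S}`. Sorting the vertices of `Sᶜ` by their number of
neighbours in `S`, and the critical ones by whether they have a private neighbour, writes
`2n|𝒟| - 3 ∑ |S|` as a sum of one term per vertex. The only negative terms count the sets in which
a vertex `v` is solitary (dominated only by itself, with no private neighbour). If `v` has at least
two neighbours, replacing `v` by all of them injects these sets into those in which `v` is doubly
dominated, but not onto. If `v` is a leaf at `w`, they are the sets in which `w` is doubly
dominated, and that cost is moved to `w`. There it is paid for by replacing the leaves at `w` by `w`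
itself, which turns all of these leaves into private neighbours of `w`. After this discharging,
leaves have charge `0`, and non-leaves have positive charge unless they have one or two leaf
neighbours; if every non-leaf has, the payment is exact everywhere and all charges vanish.
-/

open Finset SimpleGraph
open scoped symmDiff

section Exchange

variable {α : Type*} {S F : Finset α} {v : α}

theorem symmDiff_insert_eq_erase_union (hv : v ∈ S) (hF : Disjoint S F) :
    S ∆ insert v F = (S ∪ F).erase v := by
  ext z
  have : z ∈ S → z ∉ F := fun hz ↦ disjoint_left.1 hF hz
  by_cases hz : z = v
  · simp [mem_symmDiff, hz, hv]
  · simp only [mem_symmDiff, mem_insert, mem_erase, mem_union]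
    tauto

theorem symmDiff_insert_eq_insert_sdiff (hv : v ∉ S) (hF : F ⊆ S) :
    S ∆ insert v F = insert v (S \ F) := by
  ext z
  have := @hF z
  by_cases hz : z = v
  · simp [mem_symmDiff, hz, hv]
  · simp only [mem_symmDiff, mem_insert, mem_sdiff]
    tauto

theorem card_le_card_of_symmDiff {𝒜 ℬ : Finset (Finset α)} (T : Finset α)
    (h : ∀ S ∈ 𝒜, S ∆ T ∈ ℬ) : #𝒜 ≤ #ℬ :=
  card_le_card_of_injOn (· ∆ T) h (symmDiff_left_injective T).injOn

end Exchange

section DominatingSets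

variable {V : Type*} [Fintype V] {G : SimpleGraph V} {S : Finset V} {u v x : V}

/-! ### Private neighbours -/

theorem mem_domSets : S ∈ domSets G ↔ ∀ v ∉ S, ∃ u ∈ S, G.Adj u v := by
  simp [domSets]

theorem univ_mem_domSets (G : SimpleGraph V) : univ ∈ domSets G := by
  simp [domSets]

theorem mem_domSets_of_subset {T : Finset V} (hST : S ⊆ T) (hS : S ∈ domSets G) :
    T ∈ domSets G := by
  rw [mem_domSets] at hS ⊢
  intro v hv
  obtain ⟨u, hu, huv⟩ := hS v (mt (@hST v) hv)
  exact ⟨u, hST hu, huv⟩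

/-- The external private neighbours of `u` with respect to `S`: the vertices outside `S` having
`u` as their unique neighbour in `S`. -/
noncomputable def privNbrs (G : SimpleGraph V) (S : Finset V) (u : V) : Finset V :=
  {x | x ∉ S ∧ S ∩ G.neighborFinset x = {u}}

theorem mem_privNbrs :
    x ∈ privNbrs G S u ↔ x ∉ S ∧ u ∈ S ∧ G.Adj u x ∧ ∀ y ∈ S, G.Adj y x → y = u := by
  simp only [privNbrs, mem_filter_univ, Finset.eq_singleton_iff_unique_mem, mem_inter,
    mem_neighborFinset, G.adj_comm x, and_assoc, and_imp]

theorem privNbrs_eq_empty_of_notMem (hu : u ∉ S) : privNbrs G S u = ∅ :=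
  eq_empty_of_forall_notMem fun _ hx ↦ hu (mem_privNbrs.1 hx).2.1

theorem mem_privNbrs_iff_of_mem_domSets (hS : S ∈ domSets G) :
    x ∈ privNbrs G S u ↔ x ∉ S ∧ ∀ y ∈ S.erase u, ¬ G.Adj y x := by
  rw [mem_privNbrs]
  constructor
  · rintro ⟨hx, -, -, huniq⟩
    exact ⟨hx, fun y hy hyx ↦ ne_of_mem_erase hy (huniq y (mem_of_mem_erase hy) hyx)⟩
  · rintro ⟨hx, hne⟩
    have huniq : ∀ y ∈ S, G.Adj y x → y = u := fun y hy hyx ↦ by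
      by_contra hyu
      exact hne y (mem_erase.2 ⟨hyu, hy⟩) hyx
    obtain ⟨y, hy, hyx⟩ := mem_domSets.1 hS x hx
    obtain rfl := huniq y hy hyx
    exact ⟨hx, hy, hyx, huniq⟩

theorem erase_mem_domSets_iff (hS : S ∈ domSets G) (hv : v ∈ S) :
    S.erase v ∈ domSets G ↔ privNbrs G S v = ∅ ∧ ∃ y ∈ S, G.Adj y v := by
  constructor
  · intro h
    refine ⟨eq_empty_of_forall_notMem fun x hx ↦ ?_, ?_⟩
    · rw [mem_privNbrs_iff_of_mem_domSets hS] at hx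
      obtain ⟨y, hy, hyx⟩ := mem_domSets.1 h x (mt mem_of_mem_erase hx.1)
      exact hx.2 y hy hyx
    · obtain ⟨y, hy, hyv⟩ := mem_domSets.1 h v (notMem_erase v S)
      exact ⟨y, mem_of_mem_erase hy, hyv⟩
  · rintro ⟨hpriv, y, hy, hyv⟩
    rw [mem_domSets]
    intro x hx
    by_cases hxv : x = v
    · subst hxv
      exact ⟨y, mem_erase.2 ⟨G.ne_of_adj hyv, hy⟩, hyv⟩
    · by_contra! hne
      have : x ∈ privNbrs G S v :=
        (mem_privNbrs_iff_of_mem_domSets hS).2 ⟨fun hxS ↦ hx (mem_erase.2 ⟨hxv, hxS⟩), hne⟩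
      simp [hpriv] at this

/-! ### Counting pairs of a dominating set and a vertex -/

/-- The dominating sets that omit `v` and contain at least two neighbours of `v`. -/
noncomputable def doubleDomSets (G : SimpleGraph V) (v : V) : Finset (Finset V) :=
  {S ∈ domSets G | v ∉ S ∧ 1 < #(S ∩ G.neighborFinset v)}

/-- The dominating sets containing `v` in which `v` is solitary: it dominates itself, no other
vertex dominates it, and it has no private neighbour. -/
noncomputable def solitaryDomSets (G : SimpleGraph V) (v : V) : Finset (Finset V) :=
  {S ∈ domSets G | v ∈ S ∧ (∀ y ∈ S, ¬ G.Adj y v) ∧ privNbrs G S v = ∅}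

/-- The number of private neighbours of `v` beyond the first one (the subtraction is truncated),
totalled over all dominating sets. -/
noncomputable def excess (G : SimpleGraph V) (v : V) : ℕ :=
  ∑ S ∈ domSets G, (#(privNbrs G S v) - 1)

theorem mem_doubleDomSets : S ∈ doubleDomSets G v ↔
    S ∈ domSets G ∧ v ∉ S ∧ ∃ y ∈ S, ∃ z ∈ S, G.Adj y v ∧ G.Adj z v ∧ y ≠ z := by
  simp only [doubleDomSets, mem_filter, one_lt_card, mem_inter, mem_neighborFinset, G.adj_comm v]
  grind

theorem mem_solitaryDomSets : S ∈ solitaryDomSets G v ↔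
    S ∈ domSets G ∧ v ∈ S ∧ (∀ y ∈ S, ¬ G.Adj y v) ∧ privNbrs G S v = ∅ := by
  simp [solitaryDomSets]

theorem card_filter_notMem_domSets (G : SimpleGraph V) (v : V) :
    #{S ∈ domSets G | v ∉ S} = #{S ∈ domSets G | v ∈ S ∧ S.erase v ∈ domSets G} := by
  refine card_nbij' (insert v) (Finset.erase · v) ?_ ?_ ?_ ?_
  · intro S hS
    simp only [coe_filter, Set.mem_ofPred_eq] at hS ⊢
    rw [erase_insert hS.2]
    exact ⟨mem_domSets_of_subset (subset_insert v S) hS.1, mem_insert_self v S, hS.1⟩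
  · intro S hS
    simp only [coe_filter, Set.mem_ofPred_eq] at hS ⊢
    exact ⟨hS.2.2, notMem_erase v S⟩
  · intro S hS
    exact erase_insert (mem_filter.1 hS).2
  · intro S hS
    exact insert_erase (mem_filter.1 hS).2.1

theorem card_filter_mem_domSets (G : SimpleGraph V) (v : V) :
    #{S ∈ domSets G | v ∈ S} = #{S ∈ domSets G | v ∉ S} +
      #{S ∈ domSets G | (privNbrs G S v).Nonempty} + #(solitaryDomSets G v) := by
  have hdisj : Disjoint ({S ∈ domSets G | (privNbrs G S v).Nonempty}) (solitaryDomSets G v) :=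
    disjoint_filter.2 fun S _ hne hsol ↦ hne.ne_empty hsol.2.2
  rw [card_filter_notMem_domSets, add_assoc, ← card_union_of_disjoint hdisj,
    ← card_filter_add_card_filter_not (s := {S ∈ domSets G | v ∈ S})
      (fun S ↦ S.erase v ∈ domSets G), filter_filter, filter_filter]
  congr 2
  ext S
  simp only [mem_filter, mem_union, mem_solitaryDomSets]
  by_cases hS : S ∈ domSets G
  · by_cases hv : v ∈ S
    · simp only [hS, hv, erase_mem_domSets_iff hS hv, true_and]
      push Not
      simp only [nonempty_iff_ne_empty]
      tauto
    · simp [hv, privNbrs_eq_empty_of_notMem hv]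
  · simp [hS]

theorem card_compl_eq_of_mem_domSets (hS : S ∈ domSets G) :
    #Sᶜ = ∑ v, ((if S ∈ doubleDomSets G v then 1 else 0) + #(privNbrs G S v)) := by
  have hvertex : ∀ v, (if v ∉ S then 1 else 0) = (if S ∈ doubleDomSets G v then 1 else 0) +
      ∑ u, if v ∉ S ∧ S ∩ G.neighborFinset v = {u} then 1 else 0 := by
    intro v
    simp only [doubleDomSets, mem_filter, hS, true_and]
    by_cases hv : v ∈ S
    · simp [hv]
    · obtain ⟨u, hu, huv⟩ := mem_domSets.1 hS v hv
      have hpos : 0 < #(S ∩ G.neighborFinset v) :=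
        card_pos.2 ⟨u, by simp [hu, huv.symm]⟩
      obtain hle | hlt := le_or_gt #(S ∩ G.neighborFinset v) 1
      · obtain ⟨w, hw⟩ := card_eq_one.1 (hle.antisymm hpos)
        simp [hv, hw]
      · have hne : ∀ w, S ∩ G.neighborFinset v ≠ {w} := fun w hw ↦ by simp [hw] at hlt
        simp [hv, hlt, hne]
  rw [sum_add_distrib]
  simp only [privNbrs, card_filter]
  rw [sum_comm, ← sum_add_distrib, ← sum_congr rfl fun v _ ↦ hvertex v, ← card_filter]
  congr 1
  ext v
  simp

theorem sum_card_privNbrs (G : SimpleGraph V) (v : V) :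
    ∑ S ∈ domSets G, #(privNbrs G S v) =
      #{S ∈ domSets G | (privNbrs G S v).Nonempty} + excess G v := by
  rw [excess, card_filter, ← sum_add_distrib]
  refine sum_congr rfl fun S _ ↦ ?_
  simp only [← card_pos]
  split_ifs <;> omega

theorem sum_card_compl_domSets (G : SimpleGraph V) :
    ∑ S ∈ domSets G, #Sᶜ = ∑ v, (#(doubleDomSets G v) +
      #{S ∈ domSets G | (privNbrs G S v).Nonempty} + excess G v) := by
  have hdouble : ∀ v, ∑ S ∈ domSets G, (if S ∈ doubleDomSets G v then 1 else 0) =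
      #(doubleDomSets G v) := fun v ↦ by
    have hsub : doubleDomSets G v ⊆ domSets G := filter_subset _ _
    rw [← card_filter, filter_mem_eq_inter, inter_eq_right.2 hsub]
  rw [sum_congr rfl fun S hS ↦ card_compl_eq_of_mem_domSets hS, sum_comm]
  simp only [sum_add_distrib, hdouble, sum_card_privNbrs, add_assoc]

theorem two_mul_card_sub_three_mul_sum_card (G : SimpleGraph V) :
    2 * (Fintype.card V : ℤ) * #(domSets G) - 3 * ∑ S ∈ domSets G, (#S : ℤ) =
      ∑ v, ((#(doubleDomSets G v) : ℤ) + excess G v - #(solitaryDomSets G v)) := by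
  have hin : ∑ v, #{S ∈ domSets G | v ∈ S} = ∑ S ∈ domSets G, #S := by
    have := sum_card_bipartiteAbove_eq_sum_card_bipartiteBelow (fun S v ↦ v ∈ S)
      (s := domSets G) (t := univ)
    simpa [bipartiteAbove, bipartiteBelow] using this.symm
  have hout : ∑ v, #{S ∈ domSets G | v ∉ S} = ∑ S ∈ domSets G, #Sᶜ := by
    have := sum_card_bipartiteAbove_eq_sum_card_bipartiteBelow (fun S v ↦ v ∉ S)
      (s := domSets G) (t := univ)
    simpa [bipartiteAbove, bipartiteBelow, ← compl_filter] using this.symm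
  have htotal : ∑ S ∈ domSets G, #S + ∑ S ∈ domSets G, #Sᶜ = Fintype.card V * #(domSets G) := by
    simp [← sum_add_distrib, mul_comm]
  have hcompl := sum_card_compl_domSets G
  have hcrit := Fintype.sum_congr _ _ (card_filter_mem_domSets G)
  simp only [sum_add_distrib] at hcompl hcrit
  simp only [sum_add_distrib, sum_sub_distrib]
  zify at hin hout htotal hcompl hcrit
  linarith

/-! ### Leaves -/

/-- The leaf neighbours of `v` as a finset, so that they can be counted and summed over. -/
noncomputable def leafNbrs (G : SimpleGraph V) (v : V) : Finset V :=
  (leafNbrSet G v).toFinset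

theorem mem_leafNbrs : x ∈ leafNbrs G v ↔ G.Adj v x ∧ IsLeaf G x := by
  rw [leafNbrs, Set.mem_toFinset]
  rfl

theorem isSupport_iff_leafNbrs_nonempty : IsSupport G v ↔ (leafNbrs G v).Nonempty := by
  simp only [IsSupport, Finset.Nonempty, mem_leafNbrs]

theorem adj_iff_of_mem_leafNbrs (hx : x ∈ leafNbrs G v) : G.Adj u x ↔ u = v := by
  obtain ⟨hvx, hleaf⟩ := mem_leafNbrs.1 hx
  obtain ⟨w, -, hw⟩ := degree_eq_one_iff_existsUnique_adj.1 hleaf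
  exact ⟨fun hux ↦ (hw u hux.symm).trans (hw v hvx.symm).symm, fun h ↦ h ▸ hvx⟩

theorem notMem_leafNbrs_self : v ∉ leafNbrs G v :=
  fun h ↦ G.irrefl (mem_leafNbrs.1 h).1

theorem sum_leaves_eq_sum_leafNbrs {M : Type*} [AddCommMonoid M] (G : SimpleGraph V) (f : V → M) :
    ∑ x with IsLeaf G x, f x = ∑ v, ∑ x ∈ leafNbrs G v, f x := by
  rw [sum_comm' (t' := {x | IsLeaf G x}) (s' := fun x ↦ G.neighborFinset x)
    (by simp [mem_leafNbrs, G.adj_comm, and_comm])]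
  refine sum_congr rfl fun x hx ↦ ?_
  have : G.degree x = 1 := (mem_filter.1 hx).2
  simp [this]

theorem leafNbrs_subset_of_notMem (hS : S ∈ domSets G) (hv : v ∉ S) : leafNbrs G v ⊆ S := by
  intro x hx
  by_contra hxS
  obtain ⟨u, hu, hux⟩ := mem_domSets.1 hS x hxS
  exact hv ((adj_iff_of_mem_leafNbrs hx).1 hux ▸ hu)

theorem leafNbrs_sdiff_subset_privNbrs (hv : v ∈ S) : leafNbrs G v \ S ⊆ privNbrs G S v := by
  intro x hx
  obtain ⟨hx, hxS⟩ := mem_sdiff.1 hx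
  exact mem_privNbrs.2
    ⟨hxS, hv, (mem_leafNbrs.1 hx).1, fun y _ ↦ (adj_iff_of_mem_leafNbrs hx).1⟩

theorem doubleDomSets_eq_empty_of_isLeaf (hv : IsLeaf G v) : doubleDomSets G v = ∅ := by
  refine filter_eq_empty_iff.2 fun S _ ⟨_, hcard⟩ ↦ hcard.not_ge ?_
  exact (card_le_card inter_subset_right).trans_eq hv

theorem excess_eq_zero_of_isLeaf (hv : IsLeaf G v) : excess G v = 0 := by
  refine sum_eq_zero fun S _ ↦ Nat.sub_eq_zero_of_le ?_
  have hsub : privNbrs G S v ⊆ G.neighborFinset v := fun x hx ↦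
    (mem_neighborFinset ..).2 (mem_privNbrs.1 hx).2.2.1
  exact (card_le_card hsub).trans_eq hv

theorem solitaryDomSets_eq_doubleDomSets (hx : x ∈ leafNbrs G v) :
    solitaryDomSets G x = doubleDomSets G v := by
  have hvx := (mem_leafNbrs.1 hx).1
  ext S
  rw [mem_solitaryDomSets, mem_doubleDomSets]
  refine and_congr_right fun hS ↦ ⟨?_, ?_⟩
  · rintro ⟨hxS, hiso, hpriv⟩
    have hv : v ∉ S := fun hv ↦ hiso v hv hvx
    have hnp : v ∉ privNbrs G S x := hpriv ▸ notMem_empty v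
    rw [mem_privNbrs_iff_of_mem_domSets hS] at hnp
    push Not at hnp
    obtain ⟨y, hy, hyv⟩ := hnp hv
    exact ⟨hv, y, mem_of_mem_erase hy, x, hxS, hyv, hvx.symm, ne_of_mem_erase hy⟩
  · rintro ⟨hv, y, hy, z, hz, hyv, hzv, hyz⟩
    refine ⟨leafNbrs_subset_of_notMem hS hv hx, fun u hu hux ↦ ?_,
      eq_empty_of_forall_notMem fun u hu ↦ ?_⟩
    · exact hv ((adj_iff_of_mem_leafNbrs hx).1 hux ▸ hu)
    · obtain ⟨-, -, hxu, huniq⟩ := mem_privNbrs.1 hu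
      obtain rfl := (adj_iff_of_mem_leafNbrs hx).1 hxu.symm
      exact hyz ((huniq y hy hyv).trans (huniq z hz hzv).symm)

theorem solitaryDomSets_eq_empty_of_leafNbrs_nonempty (h : (leafNbrs G v).Nonempty) :
    solitaryDomSets G v = ∅ := by
  obtain ⟨x, hx⟩ := h
  refine filter_eq_empty_iff.2 fun S _ ⟨hv, hiso, hpriv⟩ ↦ ?_
  have hxS : x ∉ S := fun hxS ↦ hiso x hxS (mem_leafNbrs.1 hx).1.symm
  have := leafNbrs_sdiff_subset_privNbrs hv (mem_sdiff.2 ⟨hx, hxS⟩)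
  simp [hpriv] at this

/-! ### Trading a vertex for its neighbours -/

theorem symmDiff_insert_neighborFinset (hS : S ∈ solitaryDomSets G v) :
    S ∆ insert v (G.neighborFinset v) = (S ∪ G.neighborFinset v).erase v := by
  obtain ⟨-, hv, hiso, -⟩ := mem_solitaryDomSets.1 hS
  refine symmDiff_insert_eq_erase_union hv (disjoint_left.2 fun y hy hvy ↦ ?_)
  exact hiso y hy ((mem_neighborFinset ..).1 hvy).symm

theorem exists_adj_erase_of_mem_solitaryDomSets (hS : S ∈ solitaryDomSets G v) (hx : x ∉ S) :
    ∃ u ∈ S.erase v, G.Adj u x := by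
  obtain ⟨hdom, -, -, hpriv⟩ := mem_solitaryDomSets.1 hS
  by_contra! hne
  have := (mem_privNbrs_iff_of_mem_domSets hdom).2 ⟨hx, hne⟩
  simp [hpriv] at this

theorem symmDiff_mem_doubleDomSets_of_mem_solitaryDomSets (hdeg : 1 < G.degree v)
    (hS : S ∈ solitaryDomSets G v) :
    S ∆ insert v (G.neighborFinset v) ∈ doubleDomSets G v := by
  rw [symmDiff_insert_neighborFinset hS]
  obtain ⟨x, hx, y, hy, hxy⟩ := one_lt_card.1 hdeg
  rw [mem_neighborFinset] at hx hy
  refine mem_doubleDomSets.2 ⟨mem_domSets.2 fun z hz ↦ ?_, notMem_erase _ _,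
    x, by simp [hx, hx.ne'], y, by simp [hy, hy.ne'], hx.symm, hy.symm, hxy⟩
  by_cases hzv : z = v
  · subst hzv
    exact ⟨x, by simp [hx, hx.ne'], hx.symm⟩
  · have hzS : z ∉ S := fun h ↦ hz (by simp [hzv, h])
    obtain ⟨u, hu, huz⟩ := exists_adj_erase_of_mem_solitaryDomSets hS hzS
    exact ⟨u, erase_subset_erase v subset_union_left hu, huz⟩

/-- The witness: keep all of `N(v)`, and of the rest only what is not adjacent to a fixed
neighbour `x` of `v`. A set in which `v` is solitary dominates `x` from outside `N(v)`, so trading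
cannot give the witness. -/
theorem exists_mem_doubleDomSets_forall_symmDiff_ne (hdeg : 1 < G.degree v) :
    ∃ T ∈ doubleDomSets G v,
      ∀ S ∈ solitaryDomSets G v, S ∆ insert v (G.neighborFinset v) ≠ T := by
  obtain ⟨x, hx, y, hy, hxy⟩ := one_lt_card.1 hdeg
  rw [mem_neighborFinset] at hx hy
  refine ⟨(G.neighborFinset x)ᶜ ∪ G.neighborFinset v, mem_doubleDomSets.2
    ⟨mem_domSets.2 fun z hz ↦ ⟨x, by simp, ?_⟩, by simp [hx.symm],
      x, by simp, y, by simp [hy], hx.symm, hy.symm, hxy⟩, fun S hS heq ↦ ?_⟩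
  · simp only [mem_union, mem_compl, mem_neighborFinset, not_or, not_not] at hz
    exact hz.1
  · rw [symmDiff_insert_neighborFinset hS] at heq
    have hiso := (mem_solitaryDomSets.1 hS).2.2.1
    obtain ⟨u, hu, hux⟩ :=
      exists_adj_erase_of_mem_solitaryDomSets hS fun hxS ↦ hiso x hxS hx.symm
    have hmem := heq ▸ erase_subset_erase v subset_union_left hu
    simp only [mem_union, mem_compl, mem_neighborFinset] at hmem
    exact hmem.elim (· hux.symm) fun hvu ↦ hiso u (mem_of_mem_erase hu) hvu.symm

theorem card_solitaryDomSets_lt_card_doubleDomSets (hdeg : 1 < G.degree v) :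
    #(solitaryDomSets G v) < #(doubleDomSets G v) := by
  obtain ⟨T, hT, hne⟩ := exists_mem_doubleDomSets_forall_symmDiff_ne hdeg
  refine (card_le_card_of_symmDiff (ℬ := (doubleDomSets G v).erase T) _ fun S hS ↦
    mem_erase.2 ⟨hne S hS, ?_⟩).trans_lt (card_erase_lt_of_mem hT)
  exact symmDiff_mem_doubleDomSets_of_mem_solitaryDomSets hdeg hS

/-! ### Trading leaves for their support vertex -/

/-- The dominating sets that contain `v` and none of its leaf neighbours. -/
noncomputable def leaflessDomSets (G : SimpleGraph V) (v : V) : Finset (Finset V) :=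
  {S ∈ domSets G | v ∈ S ∧ Disjoint S (leafNbrs G v)}

theorem mem_leaflessDomSets : S ∈ leaflessDomSets G v ↔
    S ∈ domSets G ∧ v ∈ S ∧ Disjoint S (leafNbrs G v) := by
  simp [leaflessDomSets]

theorem card_doubleDomSets_le_card_leaflessDomSets (G : SimpleGraph V) (v : V) :
    #(doubleDomSets G v) ≤ #(leaflessDomSets G v) := by
  refine card_le_card_of_symmDiff (insert v (leafNbrs G v)) fun S hS ↦ ?_
  obtain ⟨hdom, hv, -⟩ := mem_doubleDomSets.1 hS
  rw [symmDiff_insert_eq_insert_sdiff hv (leafNbrs_subset_of_notMem hdom hv), mem_leaflessDomSets]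
  refine ⟨mem_domSets.2 fun z hz ↦ ?_, mem_insert_self _ _,
    disjoint_insert_left.2 ⟨notMem_leafNbrs_self, sdiff_disjoint⟩⟩
  simp only [mem_insert, mem_sdiff, not_or, not_and, not_not] at hz
  by_cases hzS : z ∈ S
  · exact ⟨v, mem_insert_self _ _, (mem_leafNbrs.1 (hz.2 hzS)).1⟩
  · obtain ⟨u, hu, huz⟩ := mem_domSets.1 hdom z hzS
    have hul : u ∉ leafNbrs G v := fun hul ↦ hz.1 ((adj_iff_of_mem_leafNbrs hul).1 huz.symm)
    exact ⟨u, mem_insert_of_mem (mem_sdiff.2 ⟨hu, hul⟩), huz⟩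

theorem card_leafNbrs_le_card_privNbrs (hS : S ∈ leaflessDomSets G v) :
    #(leafNbrs G v) ≤ #(privNbrs G S v) := by
  obtain ⟨-, hv, hdisj⟩ := mem_leaflessDomSets.1 hS
  have := card_le_card (leafNbrs_sdiff_subset_privNbrs (G := G) hv)
  rwa [sdiff_eq_self_of_disjoint hdisj.symm] at this

theorem card_leaflessDomSets_mul_le_sum (G : SimpleGraph V) (v : V) :
    #(leaflessDomSets G v) * (#(leafNbrs G v) - 1) ≤
      ∑ S ∈ leaflessDomSets G v, (#(privNbrs G S v) - 1) := by
  rw [← smul_eq_mul]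
  exact card_nsmul_le_sum _ _ _ fun S hS ↦
    Nat.sub_le_sub_right (card_leafNbrs_le_card_privNbrs hS) 1

theorem card_doubleDomSets_mul_le_excess (G : SimpleGraph V) (v : V) :
    #(doubleDomSets G v) * (#(leafNbrs G v) - 1) ≤ excess G v :=
  calc
    _ ≤ #(leaflessDomSets G v) * (#(leafNbrs G v) - 1) :=
      Nat.mul_le_mul_right _ (card_doubleDomSets_le_card_leaflessDomSets G v)
    _ ≤ ∑ S ∈ leaflessDomSets G v, (#(privNbrs G S v) - 1) := card_leaflessDomSets_mul_le_sum G v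
    _ ≤ excess G v := sum_le_sum_of_subset (filter_subset _ _)

/-- With three leaves at `v`, omitting exactly two of them gives a dominating set which contributes
to the excess without being leafless. -/
theorem sum_leaflessDomSets_lt_excess (h : 2 < #(leafNbrs G v)) :
    ∑ S ∈ leaflessDomSets G v, (#(privNbrs G S v) - 1) < excess G v := by
  obtain ⟨a, b, c, ha, hb, hc, hab, hac, hbc⟩ := two_lt_card_iff.1 h
  have hpair : ∀ x ∈ ({a, b} : Finset V), x ∈ leafNbrs G v := by simp [ha, hb]
  have hv : v ∈ ({a, b} : Finset V)ᶜ :=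
    mem_compl.2 fun hv ↦ notMem_leafNbrs_self (hpair v hv)
  have hdom : ({a, b} : Finset V)ᶜ ∈ domSets G := mem_domSets.2 fun x hx ↦
    ⟨v, hv, (mem_leafNbrs.1 (hpair x (notMem_compl.1 hx))).1⟩
  have hnotMem : ({a, b} : Finset V)ᶜ ∉ leaflessDomSets G v := fun hmem ↦
    disjoint_left.1 (mem_leaflessDomSets.1 hmem).2.2 (by simp [hac.symm, hbc.symm]) hc
  have hpriv : {a, b} ⊆ privNbrs G {a, b}ᶜ v := fun x hx ↦
    leafNbrs_sdiff_subset_privNbrs hv (mem_sdiff.2 ⟨hpair x hx, notMem_compl.2 hx⟩)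
  have hcard : 2 ≤ #(privNbrs G {a, b}ᶜ v) := card_pair hab ▸ card_le_card hpriv
  exact sum_lt_sum_of_subset (filter_subset _ _) hdom hnotMem (Nat.sub_pos_of_lt hcard)
    fun _ _ _ ↦ Nat.zero_le _

theorem card_doubleDomSets_mul_lt_excess (h : 2 < #(leafNbrs G v)) :
    #(doubleDomSets G v) * (#(leafNbrs G v) - 1) < excess G v :=
  calc
    _ ≤ #(leaflessDomSets G v) * (#(leafNbrs G v) - 1) :=
      Nat.mul_le_mul_right _ (card_doubleDomSets_le_card_leaflessDomSets G v)
    _ ≤ ∑ S ∈ leaflessDomSets G v, (#(privNbrs G S v) - 1) := card_leaflessDomSets_mul_le_sum G v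
    _ < excess G v := sum_leaflessDomSets_lt_excess h

theorem privNbrs_eq_leafNbrs_sdiff (hsupp : ∀ w, ¬ IsLeaf G w → IsSupport G w)
    (hleaf : ¬ IsLeaf G v) (hS : S ∈ domSets G) (hv : v ∈ S) :
    privNbrs G S v = leafNbrs G v \ S := by
  refine Subset.antisymm (fun x hx ↦ ?_) (leafNbrs_sdiff_subset_privNbrs hv)
  obtain ⟨hxS, -, hvx, huniq⟩ := mem_privNbrs.1 hx
  refine mem_sdiff.2 ⟨mem_leafNbrs.2 ⟨hvx, ?_⟩, hxS⟩
  by_contra hxleaf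
  obtain ⟨y, hxy, hy⟩ := hsupp x hxleaf
  have hyS := leafNbrs_subset_of_notMem hS hxS (mem_leafNbrs.2 ⟨hxy, hy⟩)
  exact hleaf (huniq y hyS hxy.symm ▸ hy)

theorem excess_eq_card_leaflessDomSets_mul (hsupp : ∀ w, ¬ IsLeaf G w → IsSupport G w)
    (hleaf : ¬ IsLeaf G v) (hcard : #(leafNbrs G v) ≤ 2) :
    excess G v = #(leaflessDomSets G v) * (#(leafNbrs G v) - 1) := by
  rw [leaflessDomSets, card_filter, sum_mul, excess]
  refine sum_congr rfl fun S hS ↦ ?_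
  by_cases hv : v ∈ S
  · rw [privNbrs_eq_leafNbrs_sdiff hsupp hleaf hS hv]
    by_cases hdisj : Disjoint S (leafNbrs G v)
    · simp [hv, hdisj, sdiff_eq_self_of_disjoint hdisj.symm]
    · have hssub : leafNbrs G v \ S ⊂ leafNbrs G v :=
        sdiff_subset.ssubset_of_ne fun h ↦ hdisj (Finset.sdiff_eq_self_iff_disjoint.1 h).symm
      have := card_lt_card hssub
      simp only [hv, hdisj, and_false, if_false, zero_mul]
      omega
  · simp [hv, privNbrs_eq_empty_of_notMem hv]

theorem card_leaflessDomSets_le_card_doubleDomSets (hsupp : ∀ w, ¬ IsLeaf G w → IsSupport G w)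
    (hleaf : ¬ IsLeaf G v) (hcard : 1 < #(leafNbrs G v)) :
    #(leaflessDomSets G v) ≤ #(doubleDomSets G v) := by
  refine card_le_card_of_symmDiff (insert v (leafNbrs G v)) fun S hS ↦ ?_
  obtain ⟨hdom, hv, hdisj⟩ := mem_leaflessDomSets.1 hS
  obtain ⟨a, ha, b, hb, hab⟩ := one_lt_card.1 hcard
  have hva := (mem_leafNbrs.1 ha).1
  have hvb := (mem_leafNbrs.1 hb).1
  rw [symmDiff_insert_eq_erase_union hv hdisj]
  refine mem_doubleDomSets.2 ⟨mem_domSets.2 fun z hz ↦ ?_, notMem_erase _ _,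
    a, by simp [ha, hva.ne'], b, by simp [hb, hvb.ne'], hva.symm, hvb.symm, hab⟩
  by_cases hzv : z = v
  · subst hzv
    exact ⟨a, by simp [ha, hva.ne'], hva.symm⟩
  · simp only [mem_erase, mem_union, not_and, not_or] at hz
    obtain ⟨hzS, hzl⟩ := hz hzv
    have hnp : z ∉ privNbrs G S v := by
      rw [privNbrs_eq_leafNbrs_sdiff hsupp hleaf hdom hv]
      simp [hzl]
    rw [mem_privNbrs_iff_of_mem_domSets hdom] at hnp
    push Not at hnp
    obtain ⟨u, hu, huz⟩ := hnp hzS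
    exact ⟨u, erase_subset_erase v subset_union_left hu, huz⟩

theorem excess_eq_card_doubleDomSets_mul (hsupp : ∀ w, ¬ IsLeaf G w → IsSupport G w)
    (hleaf : ¬ IsLeaf G v) (hcard : #(leafNbrs G v) ≤ 2) :
    excess G v = #(doubleDomSets G v) * (#(leafNbrs G v) - 1) := by
  rw [excess_eq_card_leaflessDomSets_mul hsupp hleaf hcard]
  obtain hle | hlt := le_or_gt #(leafNbrs G v) 1
  · simp [Nat.sub_eq_zero_of_le hle]
  · rw [(card_leaflessDomSets_le_card_doubleDomSets hsupp hleaf hlt).antisymm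
      (card_doubleDomSets_le_card_leaflessDomSets G v)]

/-! ### Discharging -/

/-- The contribution of `v` to `2n|𝒟| - 3 ∑ |S|` after every leaf has passed the count of its
solitary sets on to its neighbour `w`; by `solitaryDomSets_eq_doubleDomSets`, that count is
`#(doubleDomSets G w)`. -/
noncomputable def charge (G : SimpleGraph V) (v : V) : ℤ :=
  #(doubleDomSets G v) + excess G v - (if IsLeaf G v then 0 else #(solitaryDomSets G v)) -
    #(leafNbrs G v) * #(doubleDomSets G v)

theorem sum_card_solitaryDomSets (G : SimpleGraph V) :
    ∑ v, #(solitaryDomSets G v) =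
      ∑ v, ((if IsLeaf G v then 0 else #(solitaryDomSets G v)) +
        #(leafNbrs G v) * #(doubleDomSets G v)) := by
  have hleaves : ∑ x with IsLeaf G x, #(solitaryDomSets G x) =
      ∑ v, #(leafNbrs G v) * #(doubleDomSets G v) := by
    rw [sum_leaves_eq_sum_leafNbrs]
    exact sum_congr rfl fun v _ ↦ sum_const_nat fun x hx ↦
      congrArg Finset.card (solitaryDomSets_eq_doubleDomSets hx)
  rw [sum_add_distrib, ← hleaves, sum_filter, ← sum_add_distrib]
  refine sum_congr rfl fun v _ ↦ ?_
  split_ifs <;> simp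

theorem sum_charge (G : SimpleGraph V) :
    ∑ v, charge G v =
      2 * (Fintype.card V : ℤ) * #(domSets G) - 3 * ∑ S ∈ domSets G, (#S : ℤ) := by
  have hsol := sum_card_solitaryDomSets G
  rw [two_mul_card_sub_three_mul_sum_card]
  simp only [charge, sum_add_distrib, sum_sub_distrib] at hsol ⊢
  push_cast
  zify at hsol
  linarith

theorem avd_eq_iff_sum_charge_eq_zero (G : SimpleGraph V) :
    avd G = 2 * (Fintype.card V : ℚ) / 3 ↔ ∑ v, charge G v = 0 := by
  have hpos : (#(domSets G) : ℚ) ≠ 0 :=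
    Nat.cast_ne_zero.2 (card_ne_zero_of_mem (univ_mem_domSets G))
  rw [sum_charge, avd, div_eq_div_iff hpos three_ne_zero, ← @Int.cast_inj ℚ, eq_comm, ← sub_eq_zero]
  push_cast
  rw [mul_comm (∑ S ∈ domSets G, (#S : ℚ))]

theorem charge_eq_zero_of_isLeaf (hv : IsLeaf G v) : charge G v = 0 := by
  simp [charge, hv, doubleDomSets_eq_empty_of_isLeaf, excess_eq_zero_of_isLeaf]

theorem charge_of_leafNbrs_nonempty (h : (leafNbrs G v).Nonempty) :
    charge G v = excess G v - (#(doubleDomSets G v) * (#(leafNbrs G v) - 1) : ℕ) := by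
  simp only [charge, solitaryDomSets_eq_empty_of_leafNbrs_nonempty h]
  push_cast [Nat.cast_sub (card_pos.2 h)]
  simp only [card_empty, Nat.cast_zero, ite_self, sub_zero]
  ring

theorem charge_pos_of_leafNbrs_eq_empty (hleaf : ¬ IsLeaf G v) (hiso : ¬ G.IsIsolated v)
    (h : leafNbrs G v = ∅) : 0 < charge G v := by
  have hdeg : 1 < G.degree v := by
    have hpos : 0 < G.degree v := (G.degree_pos_iff_exists_adj v).2
      (exists_adj_iff_not_isIsolated.2 hiso)
    exact lt_of_le_of_ne hpos (Ne.symm hleaf)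
  have := card_solitaryDomSets_lt_card_doubleDomSets hdeg
  simp only [charge, hleaf, h, if_false, card_empty]
  omega

theorem charge_nonneg (hiso : ¬ G.IsIsolated v) : 0 ≤ charge G v := by
  by_cases hleaf : IsLeaf G v
  · exact (charge_eq_zero_of_isLeaf hleaf).ge
  obtain h | h := (leafNbrs G v).eq_empty_or_nonempty
  · exact (charge_pos_of_leafNbrs_eq_empty hleaf hiso h).le
  · rw [charge_of_leafNbrs_nonempty h, sub_nonneg, Nat.cast_le]
    exact card_doubleDomSets_mul_le_excess G v

theorem card_leafNbrs_of_charge_eq_zero (hleaf : ¬ IsLeaf G v) (hiso : ¬ G.IsIsolated v)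
    (h : charge G v = 0) : #(leafNbrs G v) = 1 ∨ #(leafNbrs G v) = 2 := by
  have hne : (leafNbrs G v).Nonempty := nonempty_iff_ne_empty.2 fun hempty ↦
    (charge_pos_of_leafNbrs_eq_empty hleaf hiso hempty).ne' h
  have hle : #(leafNbrs G v) ≤ 2 := by
    by_contra! hlt
    have := card_doubleDomSets_mul_lt_excess hlt
    rw [charge_of_leafNbrs_nonempty hne] at h
    omega
  have := hne.card_pos
  omega

theorem charge_eq_zero_of_card_leafNbrs_le_two (hsupp : ∀ w, ¬ IsLeaf G w → IsSupport G w)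
    (hcard : #(leafNbrs G v) ≤ 2) : charge G v = 0 := by
  by_cases hleaf : IsLeaf G v
  · exact charge_eq_zero_of_isLeaf hleaf
  · rw [charge_of_leafNbrs_nonempty (isSupport_iff_leafNbrs_nonempty.1 (hsupp v hleaf)),
      excess_eq_card_doubleDomSets_mul hsupp hleaf hcard, sub_self]

theorem avd_tree_eq_iff_general (G : SimpleGraph V) (hiso : ∀ v, ¬ G.IsIsolated v) :
    avd G = 2 * (Fintype.card V : ℚ) / 3 ↔
      ∀ v : V, ¬ IsLeaf G v →
        IsSupport G v ∧ ((leafNbrSet G v).ncard = 1 ∨ (leafNbrSet G v).ncard = 2) := by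
  have hncard : ∀ v, (leafNbrSet G v).ncard = #(leafNbrs G v) := fun v ↦
    Set.ncard_eq_toFinset_card' _
  rw [avd_eq_iff_sum_charge_eq_zero, sum_eq_zero_iff_of_nonneg fun v _ ↦ charge_nonneg (hiso v)]
  simp only [hncard, mem_univ, true_imp_iff]
  constructor
  · intro h v hleaf
    have hcard := card_leafNbrs_of_charge_eq_zero hleaf (hiso v) (h v)
    exact ⟨isSupport_iff_leafNbrs_nonempty.2 (card_pos.1 (by omega)), hcard⟩
  · intro h v
    by_cases hleaf : IsLeaf G v
    · exact charge_eq_zero_of_isLeaf hleaf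
    · exact charge_eq_zero_of_card_leafNbrs_le_two (fun w hw ↦ (h w hw).1)
        (by have := (h v hleaf).2; omega)

end DominatingSets

/-- For a tree `G` of order `n ≥ 2`, `avd G = 2n/3` iff every non-leaf vertex of `G` is a
support vertex with exactly one or two leaf neighbors. -/
theorem avd_tree_eq_iff {V : Type*} [Fintype V] (G : SimpleGraph V)
    (htree : G.IsTree) (hn : 2 ≤ Fintype.card V) :
    avd G = 2 * (Fintype.card V : ℚ) / 3 ↔
      ∀ v : V, ¬ IsLeaf G v →
        IsSupport G v ∧ ((leafNbrSet G v).ncard = 1 ∨ (leafNbrSet G v).ncard = 2) := by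
  have : Nontrivial V := Fintype.one_lt_card_iff_nontrivial.1 hn
  exact avd_tree_eq_iff_general G htree.connected.preconnected.not_isIsolated
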